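/- Let A be a bounded invertible Mealy automaton over X with A = C(A), and let v be a finite word such that no word in the e-orbit O^e(v) is post-critical. Then for every finite word u, O^e(vu) = O^e(v)u = {wu : w ∈ O^e(v)}. -/

import Mathlib

/-- A Mealy automaton over alphabet `X` with state set `S`:
the transition-output function sends `(s, x)` to `(output letter, next state)`. -/
structure Mealy (S X : Type*) where
  step : S → X → X × S

namespace Mealy

variable {S X : Type*}

/-- The section `s|_v`: the state reached after processing the word `v` from state `s`. -/
def sec (A : Mealy S X) (s : S) : List X → S
  | [] => s
  | x :: v => A.sec (A.step s x).2 v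

/-- The action of a state on finite words (lists of letters, read left to right). -/
def act (A : Mealy S X) (s : S) : List X → List X
  | [] => []
  | x :: v => (A.step s x).1 :: A.act (A.step s x).2 v

/-- A state is trivial if it acts on `X^*` as the identity. -/
def IsTrivialState (A : Mealy S X) (s : S) : Prop := ∀ v : List X, A.act s v = v

/-- An automaton is invertible if every state acts on the letters by a permutation. -/
def Invertible (A : Mealy S X) : Prop :=
  ∀ s : S, Function.Bijective fun x : X => (A.step s x).1

/-- The automaton group `G_A`: the subgroup of permutations of `X^*` generated by
the permutations defined by the states of `A`. -/
def autGroup (A : Mealy S X) : Subgroup (Equiv.Perm (List X)) :=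
  Subgroup.closure { f : Equiv.Perm (List X) | ∃ s : S, ∀ v : List X, f v = A.act s v }

/-- A left-infinite sequence `…x₂x₁` is encoded as `p : ℕ → X` with `p 0 = x₁`, `p 1 = x₂`, ….
It is post-critical if it is the sequence of input labels or of output labels of a
left-infinite directed path in `A` ending at a non-trivial state. -/
def IsPostCritical (A : Mealy S X) (p : ℕ → X) : Prop :=
  ∃ (σ : ℕ → S) (inp out : ℕ → X),
    (∀ n, A.step (σ (n + 1)) (inp n) = (out n, σ n)) ∧
      ¬A.IsTrivialState (σ 0) ∧ (p = inp ∨ p = out)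

/-- The post-critical set of `A`. -/
def PostCriticalSet (A : Mealy S X) : Set (ℕ → X) := { p | A.IsPostCritical p }

/-- An automaton is bounded if its post-critical set is finite. -/
def Bounded (A : Mealy S X) : Prop := A.PostCriticalSet.Finite

/-- The length-`n` suffix (as a finite word, read left to right) of a left-infinite
sequence `…x₂x₁` encoded as `p : ℕ → X`: the word `xₙ…x₂x₁`. -/
def lsuffix (p : ℕ → X) (n : ℕ) : List X := (List.range n).reverse.map p

/-- A finite word is post-critical if it is a suffix of some post-critical sequence. -/
def IsPostCriticalWord (A : Mealy S X) (v : List X) : Prop :=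
  ∃ p : ℕ → X, A.IsPostCritical p ∧ v = lsuffix p v.length

/-- The base relation for `e`-equivalence: `v ≈ u` if some state `s` satisfies
`s|_v` trivial and `s(v) = u`, or `s|_u` trivial and `s(u) = v`. -/
def ERel (A : Mealy S X) (v u : List X) : Prop :=
  ∃ s : S, (A.IsTrivialState (A.sec s v) ∧ A.act s v = u) ∨
    (A.IsTrivialState (A.sec s u) ∧ A.act s u = v)

/-- `e`-equivalence: the equivalence relation generated by `≈`. -/
def EEquiv (A : Mealy S X) : List X → List X → Prop := Relation.EqvGen A.ERel

/-- The `e`-orbit of a word. -/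
def eOrbit (A : Mealy S X) (v : List X) : Set (List X) := { u | A.EEquiv v u }

/-- The orbit of a finite word under the automaton group. -/
def orbit (A : Mealy S X) (v : List X) : Set (List X) := { u | ∃ g ∈ A.autGroup, g v = u }

/-- Reachability by a directed path in the automaton. -/
def Reaches (A : Mealy S X) : S → S → Prop :=
  Relation.ReflTransGen fun a b => ∃ x : X, (A.step a x).2 = b

/-- The states of the circuit part `C(A)`: states reachable by a directed path
from some directed cycle of `A`. -/
def circuitStates (A : Mealy S X) : Set S :=
  { s | ∃ t : S, (∃ x : X, A.Reaches (A.step t x).2 t) ∧ A.Reaches t s }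

/-- The circuit part `C(A)` as a subautomaton. -/
def circuitPart (A : Mealy S X) : Mealy A.circuitStates X where
  step s x :=
    ((A.step s.1 x).1,
      ⟨(A.step s.1 x).2, by
        obtain ⟨t, hc, hr⟩ := s.2
        exact ⟨t, hc, hr.tail ⟨x, rfl⟩⟩⟩)

/-- The subautomaton induced on a subset of states closed under transitions. -/
def subautomaton (A : Mealy S X) (T : Set S)
    (hT : ∀ s ∈ T, ∀ x : X, (A.step s x).2 ∈ T) : Mealy T X where
  step s x := ((A.step s.1 x).1, ⟨(A.step s.1 x).2, hT s.1 s.2 x⟩)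

/-- The extension of a length- and prefix-preserving map on finite words to
right-infinite sequences (letter by letter). -/
def extOmega (f : List X → List X) (w : ℕ → X) : ℕ → X :=
  fun n => (f ((List.range (n + 1)).map w)).getD n (w n)

/-- The orbit of a right-infinite sequence under the automaton group. -/
def orbitOmega (A : Mealy S X) (w : ℕ → X) : Set (ℕ → X) :=
  { w' | ∃ g ∈ A.autGroup, w' = extOmega (⇑(g : Equiv.Perm (List X))) w }

/-- The group `G_A` is level-transitive if it acts transitively on each level `X^n`. -/
def LevelTransitive (A : Mealy S X) : Prop :=
  ∀ v u : List X, v.length = u.length → ∃ g ∈ A.autGroup, g v = u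

end Mealy

/-- The run of a deterministic finite-state machine on a right-infinite input:
`dfaRun δ q₀ w n` is the state after reading the first `n` letters. -/
def dfaRun {Q X : Type*} (δ : Q → X → Q) (q₀ : Q) (w : ℕ → X) : ℕ → Q
  | 0 => q₀
  | n + 1 => δ (dfaRun δ q₀ w n) (w n)

/-- A concrete encoding of an invertible Mealy automaton (with state set `Fin n`
over alphabet `Fin k`) as a natural number. -/
def encodeAut (n k : ℕ) (step : Fin n → Fin k → Fin k × Fin n) : ℕ :=
  Nat.pair n (Nat.pair k (Encodable.encode
    ((List.finRange n).flatMap fun s =>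
      (List.finRange k).map fun x =>
        Nat.pair ((step s x).1 : ℕ) ((step s x).2 : ℕ))))

namespace Mealy

variable {S X : Type*}

theorem sec_append (A : Mealy S X) (s : S) (v u : List X) :
    A.sec s (v ++ u) = A.sec (A.sec s v) u := by
  induction v generalizing s with
  | nil => rfl
  | cons x v ih => exact ih _

theorem act_append (A : Mealy S X) (s : S) (v u : List X) :
    A.act s (v ++ u) = A.act s v ++ A.act (A.sec s v) u := by
  induction v generalizing s with
  | nil => rfl
  | cons x v ih => simp [act, sec, ih]

theorem act_length (A : Mealy S X) (s : S) (v : List X) :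
    (A.act s v).length = v.length := by
  induction v generalizing s with
  | nil => rfl
  | cons x v ih => simp [act, ih]

theorem IsTrivialState.sec {A : Mealy S X} {s : S} (h : A.IsTrivialState s) (v : List X) :
    A.IsTrivialState (A.sec s v) := by
  intro u
  have h1 := h (v ++ u)
  rw [act_append, h v] at h1
  exact List.append_cancel_left h1

theorem exists_pred (A : Mealy S X) {s : S} (hs : s ∈ A.circuitStates) :
    ∃ t x, (A.step t x).2 = s := by
  obtain ⟨t, ⟨x, hx⟩, hr⟩ := hs
  rcases Relation.ReflTransGen.cases_tail hr with h | ⟨c, _, y, hy⟩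
  · subst h
    rcases Relation.ReflTransGen.cases_tail hx with h | ⟨c, _, y, hy⟩
    · exact ⟨s, x, h.symm⟩
    · exact ⟨c, y, hy⟩
  · exact ⟨c, y, hy⟩

theorem lsuffix_succ (p : ℕ → X) (n : ℕ) :
    lsuffix p (n + 1) = lsuffix (fun k => p (k + 1)) n ++ [p 0] := by
  simp [lsuffix, List.range_succ_eq_map, Function.comp_def]

theorem exists_path (A : Mealy S X) (hCA : ∀ s : S, s ∈ A.circuitStates) (s : S) (w : List X) :
    ∃ (σ : ℕ → S) (inp out : ℕ → X),
      (∀ n, A.step (σ (n + 1)) (inp n) = (out n, σ n)) ∧ σ 0 = A.sec s w ∧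
      w = lsuffix inp w.length ∧ A.act s w = lsuffix out w.length := by
  induction w using List.reverseRecOn with
  | nil =>
    choose f g hfg using fun t => A.exists_pred (hCA t)
    refine ⟨fun n => f^[n] s, fun n => g (f^[n] s),
      fun n => (A.step (f^[n+1] s) (g (f^[n] s))).1, ?_, rfl, rfl, rfl⟩
    intro n
    refine Prod.ext rfl ?_
    simp only [Function.iterate_succ_apply']
    exact hfg _
  | append_singleton w x ih =>
    obtain ⟨σ, inp, out, h, h0, hi, ho⟩ := ih
    refine ⟨fun n => n.casesOn (A.step (A.sec s w) x).2 σ, fun n => n.casesOn x inp,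
      fun n => n.casesOn (A.step (A.sec s w) x).1 out, ?_, ?_, ?_, ?_⟩
    · rintro (_ | n)
      · simp [h0]
      · exact h n
    · simp [sec_append, sec]
    · rw [List.length_append, List.length_singleton, lsuffix_succ]
      exact congrArg (· ++ [x]) hi
    · rw [List.length_append, List.length_singleton, lsuffix_succ, act_append]
      exact congrArg (· ++ [(A.step (A.sec s w) x).1]) ho

theorem trivial_of_not_pc (A : Mealy S X) (hCA : ∀ s : S, s ∈ A.circuitStates) (s : S)
    (w : List X) (hw : ¬A.IsPostCriticalWord w ∨ ¬A.IsPostCriticalWord (A.act s w)) :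
    A.IsTrivialState (A.sec s w) := by
  obtain ⟨σ, inp, out, h, h0, hi, ho⟩ := A.exists_path hCA s w
  by_contra hn
  rw [← h0] at hn
  rcases hw with hw | hw
  · exact hw ⟨inp, ⟨σ, inp, out, h, hn, Or.inl rfl⟩, hi⟩
  · exact hw ⟨out, ⟨σ, inp, out, h, hn, Or.inr rfl⟩, by rw [act_length]; exact ho⟩

theorem ERel.symm {A : Mealy S X} {a b : List X} (h : A.ERel a b) : A.ERel b a := by
  obtain ⟨s, h | h⟩ := h
  · exact ⟨s, Or.inr h⟩
  · exact ⟨s, Or.inl h⟩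

theorem ERel.append {A : Mealy S X} {a b : List X} (h : A.ERel a b) (u : List X) :
    A.ERel (a ++ u) (b ++ u) := by
  obtain ⟨s, ⟨h1, h2⟩ | ⟨h1, h2⟩⟩ := h
  · exact ⟨s, Or.inl ⟨by rw [sec_append]; exact h1.sec u, by rw [act_append, h1 u, h2]⟩⟩
  · exact ⟨s, Or.inr ⟨by rw [sec_append]; exact h1.sec u, by rw [act_append, h1 u, h2]⟩⟩

theorem EEquiv.append {A : Mealy S X} {a b : List X} (h : A.EEquiv a b) (u : List X) :
    A.EEquiv (a ++ u) (b ++ u) := by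
  induction h with
  | rel a b h => exact .rel _ _ (h.append u)
  | refl a => exact .refl _
  | symm a b _ ih => exact .symm _ _ ih
  | trans a b c _ _ h1 h2 => exact .trans _ _ _ h1 h2

theorem ERel.mem_image {A : Mealy S X} (hCA : ∀ s : S, s ∈ A.circuitStates)
    {v u : List X} (hv : ∀ w ∈ A.eOrbit v, ¬A.IsPostCriticalWord w)
    {a b : List X} (h : A.ERel a b) (ha : a ∈ (fun w => w ++ u) '' A.eOrbit v) :
    b ∈ (fun w => w ++ u) '' A.eOrbit v := by
  obtain ⟨w, hw, rfl⟩ := ha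
  obtain ⟨s, ⟨_, h2⟩ | ⟨_, h2⟩⟩ := h
  · have ht := A.trivial_of_not_pc hCA s w (Or.inl (hv w hw))
    simp only [act_append] at h2
    rw [ht u] at h2
    exact ⟨A.act s w, .trans _ _ _ hw (.rel _ _ ⟨s, Or.inl ⟨ht, rfl⟩⟩), h2⟩
  · have hl : w.length ≤ b.length := by
      rw [← A.act_length s b, h2]; simp
    rw [← List.take_append_drop w.length b, act_append] at h2
    obtain ⟨h3, h4⟩ := List.append_inj h2 (by simp [act_length, hl])
    have ht := A.trivial_of_not_pc hCA s (b.take w.length) (Or.inr (by rw [h3]; exact hv w hw))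
    rw [ht] at h4
    refine ⟨b.take w.length, .trans _ _ _ hw (.rel _ _ ⟨s, Or.inr ⟨ht, h3⟩⟩), ?_⟩
    simp only
    rw [← h4, List.take_append_drop]

end Mealy

/-- If no word in `O^e(v)` is post-critical then
`O^e(vu) = O^e(v)u` for every word `u`. -/
theorem eOrbit_append_of_no_postCritical {S X : Type*} [Fintype S] [Fintype X]
    (hX : 2 ≤ Fintype.card X) (A : Mealy S X) (hInv : A.Invertible)
    (hBdd : A.Bounded) (hCA : ∀ s : S, s ∈ A.circuitStates)
    (v : List X) (hv : ∀ w ∈ A.eOrbit v, ¬A.IsPostCriticalWord w) :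
    ∀ u : List X, A.eOrbit (v ++ u) = (fun w => w ++ u) '' A.eOrbit v := by
  intro u
  ext b
  constructor
  · intro hb
    have key : ∀ a b, A.EEquiv a b → (a ∈ (fun w => w ++ u) '' A.eOrbit v ↔
        b ∈ (fun w => w ++ u) '' A.eOrbit v) := by
      intro a b h
      induction h with
      | rel a b h => exact ⟨h.mem_image hCA hv, h.symm.mem_image hCA hv⟩
      | refl a => exact Iff.rfl
      | symm a b _ ih => exact ih.symm
      | trans a b c _ _ h1 h2 => exact h1.trans h2
    exact (key _ _ hb).1 ⟨v, .refl _, rfl⟩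
  · rintro ⟨w, hw, rfl⟩
    exact Mealy.EEquiv.append hw u
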